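/- Let u ∈ C¹_c(ℝⁿ) and a a finite nonnegative measure on S^{n−1}. Then lim_{s→1⁻} (1−s) ∫_{ℝⁿ} dx ∫_ℝ dρ ∫_{S^{n−1}} da(ω) (u(x) − u(x+ρω))²/|ρ|^{1+2s} = ∫_{ℝⁿ} dx ∫_{S^{n−1}} da(ω) (∇u(x)·ω)². -/

import Mathlib

open MeasureTheory Real Set Filter

lemma bbm_weight_integral (s : ℝ) (h1 : 1/2 < s) (h2 : s < 1) :
    ∫ ρ in Icc (-1:ℝ) 1, (1 - s) * |ρ| ^ (1 - 2*s) = 1 := by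
  rw [← integral_indicator measurableSet_Icc]
  have e : (Icc (-1:ℝ) 1).indicator (fun ρ => (1 - s) * |ρ| ^ (1 - 2*s))
      = fun ρ => (fun r => (Iic (1:ℝ)).indicator (fun r => (1 - s) * r ^ (1 - 2*s)) r) |ρ| := by
    funext ρ
    simp only [indicator, mem_Icc, mem_Iic, abs_le]
  rw [e, integral_comp_abs, setIntegral_indicator measurableSet_Iic, Ioi_inter_Iic,
    ← intervalIntegral.integral_of_le zero_le_one, intervalIntegral.integral_const_mul,
    integral_rpow (Or.inl (by linarith)), one_rpow, zero_rpow (by linarith)]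
  have : 1 - s ≠ 0 := by linarith
  have : 1 - 2*s + 1 ≠ 0 := by intro h; linarith
  field_simp
  ring

lemma bbm_one_dim (g : ℝ → ℝ) (hg : Measurable g) (C G : ℝ) (h0 : ∀ ρ, 0 ≤ g ρ)
    (hC : ∀ ρ, g ρ ≤ C) (hC2 : ∀ ρ, |ρ| ≤ 1 → g ρ ≤ C * ρ^2)
    (hG : Tendsto (fun ρ => g ρ / ρ^2) (nhdsWithin 0 {0}ᶜ) (nhds G)) :
    (∀ᶠ s : ℝ in nhdsWithin 1 (Iio 1), Integrable (fun ρ => g ρ / |ρ| ^ (1 + 2*s))) ∧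
    Tendsto (fun s : ℝ => (1 - s) * ∫ ρ, g ρ / |ρ| ^ (1 + 2*s)) (nhdsWithin 1 (Iio 1))
      (nhds G) := by
  classical
  have hCnn : 0 ≤ C := (h0 0).trans (hC 0)
  let γ : ℝ → ℝ := Function.update (fun ρ => g ρ / ρ^2) 0 G
  let φ : ℝ → ℝ → ℝ := fun s ρ => (1 - s) * |ρ| ^ (1 - 2*s)
  have hev : ∀ᶠ s : ℝ in nhdsWithin 1 (Iio 1), 1/2 < s ∧ s < 1 := by
    have : Ioo (1/2:ℝ) 1 ∈ nhdsWithin 1 (Iio (1:ℝ)) := Ioo_mem_nhdsLT (by norm_num)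
    exact this
  have hγt : Tendsto γ (nhds 0) (nhds G) := by
    have : ContinuousAt γ 0 := by
      apply continuousAt_update_same.2 hG
    simpa [ContinuousAt, γ] using this
  have hγi : Integrable γ := by
    have hae : (fun ρ => g ρ / ρ^2) =ᵐ[volume] γ := by
      have : ∀ᵐ ρ : ℝ, ρ ≠ 0 := by simp [ae_iff]
      filter_upwards [this] with ρ hρ
      simp [γ, Function.update_of_ne hρ]
    refine Integrable.congr ?_ hae
    refine (integrable_inv_one_add_sq.const_mul (2*C)).mono'
      (hg.div (measurable_id.pow_const 2)).aestronglyMeasurable ?_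
    refine Eventually.of_forall fun ρ => ?_
    rw [Real.norm_of_nonneg (div_nonneg (h0 _) (sq_nonneg _))]
    rcases eq_or_ne ρ 0 with rfl | hρ
    · simp; linarith
    have hp : 0 < ρ^2 := by positivity
    rw [← div_eq_mul_inv, div_le_div_iff₀ hp (by positivity)]
    rcases le_or_gt |ρ| 1 with h | h
    · have := hC2 ρ h
      have := hC ρ
      have h1 : ρ^2 ≤ 1 := by rw [← sq_abs]; exact pow_le_one₀ (abs_nonneg _) h
      nlinarith [h0 ρ]
    · have := hC ρ
      have h1 : 1 ≤ ρ^2 := by rw [← sq_abs]; exact one_le_pow₀ h.le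
      nlinarith [h0 ρ]
  have hl : ∀ u : Set ℝ, IsOpen u → (0:ℝ) ∈ u →
      TendstoUniformlyOn φ 0 (nhdsWithin 1 (Iio 1)) uᶜ := by
    intro u hu h0u
    obtain ⟨δ, hδ, hb⟩ := Metric.isOpen_iff.1 hu 0 h0u
    rw [Metric.tendstoUniformlyOn_iff]
    intro ε hε
    set d := min δ 1 with hd
    have hd0 : 0 < d := lt_min hδ one_pos
    have h3 : ∀ᶠ s : ℝ in nhdsWithin 1 (Iio 1), 1 - ε * d < s := by
      apply nhdsWithin_le_nhds
      exact lt_mem_nhds (by nlinarith [mul_pos hε hd0])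
    filter_upwards [hev, h3] with s hs hs3 ρ hρ
    have hρd : d ≤ |ρ| := by
      by_contra hlt
      apply hρ
      apply hb
      simp only [Metric.mem_ball, dist_zero_right, Real.norm_eq_abs]
      exact (not_le.1 hlt).trans_le (min_le_left _ _)
    simp only [Pi.zero_apply, dist_zero_left, φ]
    rw [Real.norm_of_nonneg (mul_nonneg (by linarith) (by positivity))]
    have h4 : |ρ| ^ (1 - 2*s) ≤ d⁻¹ := by
      calc |ρ| ^ (1 - 2*s) ≤ d ^ (1 - 2*s) := 
            rpow_le_rpow_of_nonpos hd0 hρd (by linarith)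
        _ ≤ d ^ (-1:ℝ) := rpow_le_rpow_of_exponent_ge hd0 (min_le_right _ _) (by linarith)
        _ = d⁻¹ := rpow_neg_one d
    calc (1 - s) * |ρ| ^ (1 - 2*s) ≤ (1 - s) * d⁻¹ := by gcongr; linarith
      _ < ε := by rw [← div_eq_mul_inv, div_lt_iff₀ hd0]; linarith
  have hi : Tendsto (fun s ↦ ∫ ρ in Icc (-1:ℝ) 1, φ s ρ) (nhdsWithin 1 (Iio 1)) (nhds 1) := by
    refine tendsto_const_nhds.congr' ?_
    filter_upwards [hev] with s hs
    exact (bbm_weight_integral s hs.1 hs.2).symm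
  have hm : ∀ᶠ s in nhdsWithin 1 (Iio (1:ℝ)), AEStronglyMeasurable (φ s) volume :=
    Eventually.of_forall fun s => by
      apply Measurable.aestronglyMeasurable
      simp only [φ]
      fun_prop
  have heq : ∀ s : ℝ, 1/2 < s → s < 1 → ∀ ρ, φ s ρ • γ ρ = (1 - s) * (g ρ / |ρ| ^ (1 + 2*s)) := by
    intro s h1 h2 ρ
    rcases eq_or_ne ρ 0 with rfl | hρ
    · simp only [φ, abs_zero]
      rw [zero_rpow (by linarith), zero_rpow (by linarith)]; simp
    · have hp : 0 < |ρ| := abs_pos.2 hρ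
      simp only [φ, γ, Function.update_of_ne hρ, smul_eq_mul]
      rw [← sq_abs ρ, mul_assoc]
      congr 1
      have : |ρ| ^ (1 + 2*s) * |ρ| ^ (1 - 2*s) = |ρ|^2 := by
        rw [← rpow_add hp, ← rpow_natCast]; congr 1; push_cast; ring
      rw [← this]
      have := (rpow_pos_of_pos hp (1+2*s)).ne'
      have := (rpow_pos_of_pos hp (1-2*s)).ne'
      field_simp
  constructor
  · have := integrableOn_peak_smul_of_integrableOn_of_tendsto (μ := volume) (s := univ)
      (t := Icc (-1:ℝ) 1) (x₀ := 0) (φ := φ) (g := γ) (l := nhdsWithin 1 (Iio 1))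
      MeasurableSet.univ
      (by rw [nhdsWithin_univ]; exact Icc_mem_nhds (by norm_num) (by norm_num))
      (by simpa [← compl_eq_univ_sdiff] using hl) hi (by simpa using hm)
      (by simpa using hγi) (by simpa [nhdsWithin_univ] using hγt)
    filter_upwards [this, hev] with s hs hs2
    rw [integrableOn_univ] at hs
    have h5 : Integrable (fun ρ => (1 - s)⁻¹ * (φ s ρ • γ ρ)) := hs.const_mul _
    refine h5.congr (Eventually.of_forall fun ρ => ?_)
    simp only [heq s hs2.1 hs2.2]
    rw [inv_mul_cancel_left₀]
    linarith
  · have := tendsto_integral_peak_smul_of_integrable_of_tendsto (μ := volume) (φ := φ) (g := γ)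
      (x₀ := 0) (l := nhdsWithin 1 (Iio 1)) (t := Icc (-1:ℝ) 1) measurableSet_Icc
      (Icc_mem_nhds (by norm_num) (by norm_num)) (by simp)
      (by filter_upwards [hev] with s hs ρ
          exact mul_nonneg (by linarith) (by positivity)) hl hi hm hγi hγt
    refine this.congr' ?_
    filter_upwards [hev] with s hs
    simp_rw [heq s hs.1 hs.2]
    rw [integral_const_mul]

theorem stmt15 (n : ℕ) (u : EuclideanSpace ℝ (Fin n) → ℝ)
    (hu : ContDiff ℝ 1 u) (hsupp : HasCompactSupport u)
    (a : Measure (Metric.sphere (0 : EuclideanSpace ℝ (Fin n)) 1)) [IsFiniteMeasure a] :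
    Filter.Tendsto (fun s : ℝ =>
        (1 - s) * ∫ x : EuclideanSpace ℝ (Fin n), ∫ ρ : ℝ,
            ∫ ω : Metric.sphere (0 : EuclideanSpace ℝ (Fin n)) 1,
              (u x - u (x + ρ • (ω : EuclideanSpace ℝ (Fin n))))^2 / |ρ| ^ (1 + 2*s) ∂a)
      (nhdsWithin 1 (Set.Iio 1))
      (nhds (∫ x : EuclideanSpace ℝ (Fin n),
          ∫ ω : Metric.sphere (0 : EuclideanSpace ℝ (Fin n)) 1,
            (fderiv ℝ u x (ω : EuclideanSpace ℝ (Fin n)))^2 ∂a)) := by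
  have huc : Continuous u := hu.continuous
  obtain ⟨L, hL⟩ := ContDiff.lipschitzWith_of_hasCompactSupport hsupp hu one_ne_zero
  obtain ⟨R, hR⟩ : ∃ R : ℝ, ∀ x, R < ‖x‖ → u x = 0 := by
    obtain ⟨R, hR⟩ := hsupp.isCompact.isBounded.subset_closedBall 0
    refine ⟨R, fun x hx => ?_⟩
    apply image_eq_zero_of_notMem_tsupport
    intro h
    have := hR h
    simp at this
    linarith
  have hω : ∀ ω : Metric.sphere (0 : EuclideanSpace ℝ (Fin n)) 1,
      ‖(ω : EuclideanSpace ℝ (Fin n))‖ = 1 := fun ω => by simpa using ω.2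
  let H : EuclideanSpace ℝ (Fin n) → ℝ → Metric.sphere (0 : EuclideanSpace ℝ (Fin n)) 1 → ℝ :=
    fun x ρ ω => (u x - u (x + ρ • (ω : EuclideanSpace ℝ (Fin n))))^2
  have hHc : Continuous (fun p : (EuclideanSpace ℝ (Fin n) × ℝ) × 
      Metric.sphere (0 : EuclideanSpace ℝ (Fin n)) 1 => H p.1.1 p.1.2 p.2) := by
    simp only [H]; fun_prop
  have hH0 : ∀ x ρ ω, 0 ≤ H x ρ ω := fun x ρ ω => sq_nonneg _
  have hHs : ∀ x ρ ω, R + |ρ| < ‖x‖ → H x ρ ω = 0 := by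
    intro x ρ ω hx
    have h1 : u x = 0 := hR x (by linarith [abs_nonneg ρ])
    have h2 : u (x + ρ • (ω : EuclideanSpace ℝ (Fin n))) = 0 := by
      apply hR
      have := norm_sub_norm_le x (-(ρ • (ω : EuclideanSpace ℝ (Fin n))))
      rw [norm_neg, norm_smul, hω, sub_neg_eq_add, Real.norm_eq_abs] at this
      linarith
    simp [H, h1, h2]
  have hHL : ∀ x ρ ω, H x ρ ω ≤ L^2 * ρ^2 := by
    intro x ρ ω
    have := hL.dist_le_mul x (x + ρ • (ω : EuclideanSpace ℝ (Fin n)))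
    rw [dist_self_add_right, norm_smul, hω, mul_one, Real.dist_eq, Real.norm_eq_abs] at this
    simp only [H]
    rw [← sq_abs, ← sq_abs ρ, ← mul_pow]
    gcongr
  let h : EuclideanSpace ℝ (Fin n) → ℝ → ℝ := fun x ρ => ∫ ω, H x ρ ω ∂a
  have hh0 : ∀ x ρ, 0 ≤ h x ρ := fun x ρ => integral_nonneg (hH0 x ρ)
  have hhm : StronglyMeasurable (fun p : EuclideanSpace ℝ (Fin n) × ℝ => h p.1 p.2) :=
    StronglyMeasurable.integral_prod_right' hHc.stronglyMeasurable
  let g : ℝ → ℝ := fun ρ => ∫ x, h x ρ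
  have hg0 : ∀ ρ, 0 ≤ g ρ := fun ρ => integral_nonneg fun x => hh0 x ρ
  have hgm : StronglyMeasurable g :=
    StronglyMeasurable.integral_prod_left' hhm
  have hHcρ : ∀ ρ, Continuous (Function.uncurry fun x ω => H x ρ ω) := fun ρ => by
    simp only [H]; fun_prop
  have hHsup : ∀ ρ, HasCompactSupport (Function.uncurry fun x ω => H x ρ ω) := fun ρ => by
    apply HasCompactSupport.intro
      ((isCompact_closedBall (0 : EuclideanSpace ℝ (Fin n)) (R + |ρ|)).prod isCompact_univ)
    rintro ⟨x, ω⟩ hx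
    apply hHs
    simpa using hx
  have hHint : ∀ ρ, Integrable (fun p : EuclideanSpace ℝ (Fin n) × _ => H p.1 ρ p.2)
      (volume.prod a) := fun ρ => (hHcρ ρ).integrable_of_hasCompactSupport (hHsup ρ)
  have hhint : ∀ ρ, Integrable (fun x => h x ρ) := fun ρ => (hHint ρ).integral_prod_left
  have hgprod : ∀ ρ, g ρ = ∫ p : EuclideanSpace ℝ (Fin n) × _, H p.1 ρ p.2 ∂(volume.prod a) :=
    fun ρ => (integral_prod _ (hHint ρ)).symm
  have hu2 : Integrable (fun x => u x ^ 2) := by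
    apply Continuous.integrable_of_hasCompactSupport (by fun_prop)
    exact hsupp.comp_left (g := fun t : ℝ => t^2) (by simp)
  set V := volume.real (Metric.closedBall (0 : EuclideanSpace ℝ (Fin n)) (R+1)) with hV
  set A := a.real univ with hA
  -- global bound
  have hb1 : ∀ ρ, g ρ ≤ (4 * ∫ x, u x ^ 2) * A := by
    intro ρ
    have e : g ρ = ∫ ω, (∫ x, H x ρ ω) ∂a :=
      integral_integral_swap_of_hasCompactSupport (hHcρ ρ) (hHsup ρ)
    rw [e]
    have : ∀ ω, ∫ x, H x ρ ω ≤ 4 * ∫ x, u x ^ 2 := by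
      intro ω
      have ht : Integrable (fun x => u (x + ρ • (ω : EuclideanSpace ℝ (Fin n))) ^ 2) :=
        hu2.comp_add_right _
      calc ∫ x, H x ρ ω ≤ ∫ x, (2 * u x ^ 2 + 2 * u (x + ρ • (ω : EuclideanSpace ℝ (Fin n))) ^ 2) := by
            apply integral_mono_of_nonneg (Eventually.of_forall fun x => hH0 x ρ ω)
              ((hu2.const_mul 2).add (ht.const_mul 2))
            refine Eventually.of_forall fun x => ?_
            simp only [H, Pi.add_apply]
            nlinarith [sq_nonneg (u x + u (x + ρ • (ω : EuclideanSpace ℝ (Fin n))))]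
        _ = 4 * ∫ x, u x ^ 2 := by
            rw [integral_add (hu2.const_mul 2) (ht.const_mul 2), integral_const_mul,
              integral_const_mul, integral_add_right_eq_self (fun x => u x ^ 2)]
            ring
    calc ∫ ω, (∫ x, H x ρ ω) ∂a ≤ ∫ ω, (4 * ∫ x, u x ^ 2) ∂a := by
          apply integral_mono_of_nonneg
          · exact Eventually.of_forall fun ω => integral_nonneg fun x => hH0 x ρ ω
          · exact integrable_const _
          · exact Eventually.of_forall this
      _ = _ := by simp [hA, mul_comm]
  let B : EuclideanSpace ℝ (Fin n) × Metric.sphere (0 : EuclideanSpace ℝ (Fin n)) 1 → ℝ :=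
    (Metric.closedBall (0 : EuclideanSpace ℝ (Fin n)) (R+1) ×ˢ univ).indicator fun _ => (L:ℝ)^2
  have hBm : MeasurableSet (Metric.closedBall (0 : EuclideanSpace ℝ (Fin n)) (R+1) ×ˢ 
      (univ : Set (Metric.sphere (0 : EuclideanSpace ℝ (Fin n)) 1))) :=
    measurableSet_closedBall.prod MeasurableSet.univ
  have hBi : Integrable B (volume.prod a) := by
    rw [integrable_indicator_iff hBm]
    apply integrableOn_const
    · rw [Measure.prod_prod]
      exact (ENNReal.mul_lt_top measure_closedBall_lt_top (measure_lt_top _ _)).ne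
    · simp
  have hHB : ∀ ρ, |ρ| ≤ 1 → ∀ p : EuclideanSpace ℝ (Fin n) × _, H p.1 ρ p.2 ≤ B p * ρ^2 := by
    intro ρ hρ p
    by_cases hp : ‖p.1‖ ≤ R + 1
    · have : B p = (L:ℝ)^2 := indicator_of_mem (by simpa using hp) _
      rw [this]; exact hHL _ _ _
    · rw [hHs _ _ _ (by linarith)]
      exact mul_nonneg (indicator_nonneg (fun _ _ => sq_nonneg _) _) (sq_nonneg _)
  have hb2 : ∀ ρ, |ρ| ≤ 1 → g ρ ≤ (∫ p, B p ∂(volume.prod a)) * ρ^2 := by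
    intro ρ hρ
    rw [hgprod, ← integral_mul_const]
    exact integral_mono (hHint ρ) (hBi.mul_const _) (hHB ρ hρ)
  -- the limit at 0
  have hlimp : Tendsto (fun ρ => g ρ / ρ^2) (nhdsWithin 0 {0}ᶜ)
      (nhds (∫ p : EuclideanSpace ℝ (Fin n) × Metric.sphere (0 : EuclideanSpace ℝ (Fin n)) 1,
        (fderiv ℝ u p.1 (p.2 : EuclideanSpace ℝ (Fin n)))^2 ∂(volume.prod a))) := by
    simp_rw [hgprod, ← integral_div]
    apply tendsto_integral_filter_of_dominated_convergence B
    · exact Eventually.of_forall fun ρ => ((hHint ρ).div_const _).aestronglyMeasurable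
    · have : ∀ᶠ ρ : ℝ in nhdsWithin 0 {0}ᶜ, |ρ| ≤ 1 := by
        apply nhdsWithin_le_nhds
        filter_upwards [Metric.closedBall_mem_nhds (0:ℝ) one_pos] with ρ hρ
        simpa using hρ
      filter_upwards [this, self_mem_nhdsWithin] with ρ hρ hρ0
      refine Eventually.of_forall fun p => ?_
      have : 0 < ρ^2 := by have : ρ ≠ 0 := hρ0
                           positivity
      rw [Real.norm_of_nonneg (div_nonneg (hH0 _ _ _) this.le), div_le_iff₀ this]
      exact hHB ρ hρ p
    · exact hBi
    · refine Eventually.of_forall fun p => ?_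
      have hd := ((hu.differentiable one_ne_zero p.1).hasFDerivAt.hasLineDerivAt
        (p.2 : EuclideanSpace ℝ (Fin n))).tendsto_slope_zero.pow 2
      refine hd.congr fun ρ => ?_
      simp only [H, smul_eq_mul]
      rw [mul_pow, inv_pow, div_eq_inv_mul]
      ring
  have hDint : Integrable (fun p : EuclideanSpace ℝ (Fin n) × 
      Metric.sphere (0 : EuclideanSpace ℝ (Fin n)) 1 =>
        (fderiv ℝ u p.1 (p.2 : EuclideanSpace ℝ (Fin n)))^2) (volume.prod a) := by
    have hfc := hu.continuous_fderiv one_ne_zero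
    apply Continuous.integrable_of_hasCompactSupport (by fun_prop)
    apply HasCompactSupport.intro ((hsupp.fderiv ℝ).isCompact.prod isCompact_univ)
    rintro ⟨x, ω⟩ hx
    have : fderiv ℝ u x = 0 := image_eq_zero_of_notMem_tsupport (by simpa using hx)
    simp [this]
  rw [integral_prod _ hDint] at hlimp
  obtain ⟨hI, hT⟩ := bbm_one_dim g hgm.measurable
    (max ((4 * ∫ x, u x ^ 2) * A) (∫ p, B p ∂(volume.prod a))) _ hg0
    (fun ρ => (hb1 ρ).trans (le_max_left _ _))
    (fun ρ hρ => (hb2 ρ hρ).trans (by gcongr; exact le_max_right _ _)) hlimp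
  refine hT.congr' ?_
  filter_upwards [hI] with s hs
  congr 1
  have hk : Integrable (fun p : EuclideanSpace ℝ (Fin n) × ℝ => h p.1 p.2 / |p.2| ^ (1+2*s))
      (volume.prod volume) := by
    rw [integrable_prod_iff']
    · refine ⟨Eventually.of_forall fun ρ => (hhint ρ).div_const (|ρ| ^ (1+2*s)), ?_⟩
      refine hs.congr (Eventually.of_forall fun ρ => ?_)
      simp only [g]
      rw [← integral_div]
      refine integral_congr_ae (Eventually.of_forall fun x => ?_)
      exact (Real.norm_of_nonneg (div_nonneg (hh0 x ρ) (by positivity))).symm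
    · apply Measurable.aestronglyMeasurable
      exact hhm.measurable.div (by fun_prop)
  have hsw := integral_integral_swap (f := fun x ρ => h x ρ / |ρ| ^ (1+2*s)) hk
  simp only [h, g, ← integral_div] at hsw ⊢
  exact hsw.symm
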